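/- arXiv:2003.06536 — 4 statements merged into one kernel-verified Lean document; each statement's English description precedes it below -/
import Mathlib

section
/- Let σ₁,…,σ_k be distinct complex numbers, π₁,…,π_q be distinct complex numbers, let h_{ij} ∈ ℂ for 1 ≤ i ≤ k, 1 ≤ j ≤ q be data values, and let α_{ij} ∈ ℂ with α_{i₀j₀} ≠ 0 for a fixed pair (i₀, j₀). Set β_{ij} = h_{ij}·α_{ij} for all i, j, and let H̃(s,p) = (Σ_{i=1}^k Σ_{j=1}^q β_{ij}/((s−σ_i)(p−π_j))) / (Σ_{i=1}^k Σ_{j=1}^q α_{ij}/((s−σ_i)(p−π_j))). Then H̃(s,p) tends to h_{i₀j₀} as (s,p) tends to (σ_{i₀}, π_{j₀}) within the set of pairs (s,p) with s ≠ σ_i for all i and p ≠ π_j for all j. That is, the two-variable barycentric form interpolates the data value h_{i₀j₀} at the support pair (σ_{i₀}, π_{j₀}). -/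
open Filter Topology

theorem aux_one {k : ℕ} (σ : Fin k → ℂ) (hσ : Function.Injective σ) (i₀ i : Fin k)
    (l : Filter (ℂ × ℂ)) (f : ℂ × ℂ → ℂ) (hf : Tendsto f l (nhds (σ i₀)))
    (hne : ∀ᶠ x in l, f x ≠ σ i₀) :
    Tendsto (fun x => (f x - σ i₀) / (f x - σ i)) l (nhds (if i = i₀ then 1 else 0)) := by
  split_ifs with hi
  · subst hi
    refine tendsto_const_nhds.congr' ?_
    filter_upwards [hne] with x hx
    rw [div_self (sub_ne_zero.2 hx)]
  · have h1 : σ i₀ - σ i ≠ 0 := sub_ne_zero.2 fun e => hi (hσ e).symm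
    have := (hf.sub_const (σ i₀)).div (hf.sub_const (σ i)) h1
    rw [sub_self, zero_div] at this
    exact this

theorem aux_two {k q : ℕ} (σ : Fin k → ℂ) (π : Fin q → ℂ)
    (hσ : Function.Injective σ) (hπ : Function.Injective π)
    (c : Fin k → Fin q → ℂ) (i₀ : Fin k) (j₀ : Fin q) :
    Tendsto (fun x : ℂ × ℂ => ((x.1 - σ i₀) * (x.2 - π j₀)) *
        (∑ i, ∑ j, c i j / ((x.1 - σ i) * (x.2 - π j))))
      (nhdsWithin (σ i₀, π j₀)
        {x : ℂ × ℂ | (∀ i, x.1 ≠ σ i) ∧ (∀ j, x.2 ≠ π j)})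
      (nhds (c i₀ j₀)) := by
  have hm := self_mem_nhdsWithin (a := (σ i₀, π j₀))
    (s := {x : ℂ × ℂ | (∀ i, x.1 ≠ σ i) ∧ (∀ j, x.2 ≠ π j)})
  have h1 := fun i => aux_one σ hσ i₀ i _ Prod.fst
    (continuous_fst.continuousAt.mono_left nhdsWithin_le_nhds)
    (by filter_upwards [hm] with x hx using hx.1 i₀)
  have h2 := fun j => aux_one π hπ j₀ j _ Prod.snd
    (continuous_snd.continuousAt.mono_left nhdsWithin_le_nhds)
    (by filter_upwards [hm] with x hx using hx.2 j₀)
  have h3 := tendsto_finsetSum Finset.univ fun i _ =>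
    tendsto_finsetSum Finset.univ fun j _ => ((h1 i).mul (h2 j)).const_mul (c i j)
  have e : (∑ i, ∑ j, c i j * ((if i = i₀ then (1 : ℂ) else 0) * (if j = j₀ then 1 else 0)))
      = c i₀ j₀ := by
    simp
  rw [e] at h3
  refine h3.congr fun x => ?_
  simp only [Finset.mul_sum]
  refine Finset.sum_congr rfl fun i _ => Finset.sum_congr rfl fun j _ => ?_
  rw [div_mul_div_comm]
  ring

/-- Corollary 3.1(a): With distinct support points `σ i` and `π j`,
data `h i j`, weights `α i j` with `α i₀ j₀ ≠ 0`, and the interpolatory choice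
`β i j = h i j * α i j`, the two-variable barycentric form tends to `h i₀ j₀` as
`(s,p) → (σ i₀, π j₀)` within the pairs avoiding all support points; i.e. it
interpolates the data at the support pair `(σ i₀, π j₀)`. -/
theorem two_variable_barycentric_interpolation
    (k q : ℕ) (σ : Fin k → ℂ) (π : Fin q → ℂ)
    (hσ : Function.Injective σ) (hπ : Function.Injective π)
    (h α β : Fin k → Fin q → ℂ)
    (hβ : ∀ i j, β i j = h i j * α i j)
    (i₀ : Fin k) (j₀ : Fin q) (hα : α i₀ j₀ ≠ 0) :
    Tendsto (fun x : ℂ × ℂ =>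
        (∑ i, ∑ j, β i j / ((x.1 - σ i) * (x.2 - π j))) /
        (∑ i, ∑ j, α i j / ((x.1 - σ i) * (x.2 - π j))))
      (nhdsWithin (σ i₀, π j₀)
        {x : ℂ × ℂ | (∀ i, x.1 ≠ σ i) ∧ (∀ j, x.2 ≠ π j)})
      (nhds (h i₀ j₀)) := by
  have hn := aux_two σ π hσ hπ β i₀ j₀
  have hd := aux_two σ π hσ hπ α i₀ j₀
  have hq := hn.div hd hα
  rw [hβ, mul_div_cancel_right₀ _ hα] at hq
  refine hq.congr' ?_
  filter_upwards [self_mem_nhdsWithin] with x hx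
  exact mul_div_mul_left _ _ (mul_ne_zero (sub_ne_zero.2 (hx.1 i₀)) (sub_ne_zero.2 (hx.2 j₀)))
end

section
/- Let σ₁,…,σ_k and π₁,…,π_q be distinct complex numbers respectively, let h_{ij} ∈ ℂ and α_{ij} ∈ ℂ, and set β_{ij} = h_{ij}·α_{ij}. Fix an index i₀ and a point π̂ ∈ ℂ with π̂ ≠ π_j for all j, and suppose D := Σ_{j=1}^q α_{i₀j}/(π̂−π_j) ≠ 0. Then for any ĥ ∈ ℂ, the error ĥ − H̃(s,π̂) of the two-variable barycentric form H̃(s,p) = (Σ_{i,j} β_{ij}/((s−σ_i)(p−π_j))) / (Σ_{i,j} α_{ij}/((s−σ_i)(p−π_j))) tends to (Σ_{j=1}^q ((ĥ − h_{i₀j})·α_{i₀j})/(π̂−π_j)) / D as s tends to σ_{i₀} within the set of points s with s ≠ σ_i for all i. -/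
open Filter Topology

theorem aux_limit
    (k q : ℕ) (σ : Fin k → ℂ) (w : Fin q → ℂ)
    (hσ : Function.Injective σ) (c : Fin k → Fin q → ℂ) (i₀ : Fin k) :
    Tendsto (fun s : ℂ => (s - σ i₀) * ∑ i, ∑ j, c i j / ((s - σ i) * w j))
      (nhdsWithin (σ i₀) {s : ℂ | ∀ i, s ≠ σ i})
      (nhds (∑ j, c i₀ j / w j)) := by
  have key : Tendsto (fun s : ℂ => ∑ i, ((s - σ i₀) / (s - σ i)) * ∑ j, c i j / w j)
      (nhdsWithin (σ i₀) {s : ℂ | ∀ i, s ≠ σ i})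
      (nhds (∑ i, (if i = i₀ then (1 : ℂ) else 0) * ∑ j, c i j / w j)) := by
    refine tendsto_finsetSum _ fun i _ => Tendsto.mul_const _ ?_
    by_cases hi : i = i₀
    · subst hi
      rw [if_pos rfl]
      refine tendsto_const_nhds.congr' ?_
      filter_upwards [self_mem_nhdsWithin] with s hs
      exact (div_self (sub_ne_zero.2 (hs i))).symm
    · rw [if_neg hi]
      have hne : σ i₀ - σ i ≠ 0 := sub_ne_zero.2 fun e => hi (hσ e).symm
      have : ContinuousAt (fun s : ℂ => (s - σ i₀) / (s - σ i)) (σ i₀) :=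
        ContinuousAt.div (by fun_prop) (by fun_prop) hne
      have h2 := this.tendsto
      simp only [sub_self, zero_div] at h2
      exact h2.mono_left nhdsWithin_le_nhds
  have e : (∑ i, (if i = i₀ then (1 : ℂ) else 0) * ∑ j, c i j / w j) = ∑ j, c i₀ j / w j := by
    simp
  rw [e] at key
  refine key.congr fun s => ?_
  rw [Finset.mul_sum]
  refine Finset.sum_congr rfl fun i _ => ?_
  rw [Finset.mul_sum, Finset.mul_sum]
  refine Finset.sum_congr rfl fun j _ => ?_
  simp only [div_eq_mul_inv, mul_inv]
  ring

/-- With distinct support points `σ i`, `π j`, data `h i j`, weights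
`α i j`, and the interpolatory choice `β i j = h i j * α i j`, fix `i₀` and `π̂`
distinct from all `π j` with `D = ∑ j, α i₀ j/(π̂-π j) ≠ 0`. Then for any `ĥ`,
the error `ĥ - H̃(s, π̂)` tends to
`(∑ j, ((ĥ - h i₀ j) * α i₀ j)/(π̂-π j)) / D` as `s → σ i₀` within the points
distinct from all `σ i`. -/
theorem two_variable_error_grid_line_limit
    (k q : ℕ) (σ : Fin k → ℂ) (π : Fin q → ℂ)
    (hσ : Function.Injective σ) (hπ : Function.Injective π)
    (h α β : Fin k → Fin q → ℂ)
    (hβ : ∀ i j, β i j = h i j * α i j)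
    (i₀ : Fin k) (πhat : ℂ) (hπhat : ∀ j, πhat ≠ π j)
    (hD : (∑ j, α i₀ j / (πhat - π j)) ≠ 0) (hhat : ℂ) :
    Tendsto (fun s : ℂ =>
        hhat - (∑ i, ∑ j, β i j / ((s - σ i) * (πhat - π j))) /
          (∑ i, ∑ j, α i j / ((s - σ i) * (πhat - π j))))
      (nhdsWithin (σ i₀) {s : ℂ | ∀ i, s ≠ σ i})
      (nhds ((∑ j, ((hhat - h i₀ j) * α i₀ j) / (πhat - π j)) /
        (∑ j, α i₀ j / (πhat - π j)))) := by
  have hn := aux_limit k q σ (fun j => πhat - π j) hσ β i₀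
  have hd := aux_limit k q σ (fun j => πhat - π j) hσ α i₀
  have hlim := (hn.div hd hD).const_sub hhat
  have e : (∑ j, ((hhat - h i₀ j) * α i₀ j) / (πhat - π j)) /
        (∑ j, α i₀ j / (πhat - π j)) =
      hhat - (∑ j, β i₀ j / (πhat - π j)) / (∑ j, α i₀ j / (πhat - π j)) := by
    rw [eq_sub_iff_add_eq, ← add_div, div_eq_iff hD, ← Finset.sum_add_distrib, Finset.mul_sum]
    refine Finset.sum_congr rfl fun j _ => ?_
    rw [hβ]
    ring
  rw [e]
  refine hlim.congr' ?_
  filter_upwards [self_mem_nhdsWithin] with s hs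
  simp only [Pi.div_apply]
  rw [mul_div_mul_left _ _ (sub_ne_zero.2 (hs i₀))]
end

section
/- Let σ₁,…,σ_k and π₁,…,π_q be distinct complex numbers respectively, let H_{ij} be complex m×n matrices for 1 ≤ i ≤ k, 1 ≤ j ≤ q, and let α_{ij} ∈ ℂ with α_{i₀j₀} ≠ 0 for a fixed pair (i₀, j₀). Set B_{ij} = α_{ij}·H_{ij}, and define the matrix-valued barycentric form H̃(s,p) = (Σ_{i,j} B_{ij}/((s−σ_i)(p−π_j))) / (Σ_{i,j} α_{ij}/((s−σ_i)(p−π_j))), where the division is scalar division of the matrix-valued numerator by the scalar-valued denominator. Then H̃(s,p) tends (in the space of m×n complex matrices) to H_{i₀j₀} as (s,p) tends to (σ_{i₀}, π_{j₀}) within the set of pairs (s,p) with s ≠ σ_i for all i and p ≠ π_j for all j. That is, the matrix-valued barycentric form interpolates the matrix data H_{i₀j₀} at the support pair (σ_{i₀}, π_{j₀}). -/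
open Filter Topology

lemma aux_weight {k : ℕ} (σ : Fin k → ℂ) (hσ : Function.Injective σ) (i₀ i : Fin k)
    {X : Type*} (l : Filter X) (f : X → ℂ) (hf : Tendsto f l (nhds (σ i₀)))
    (hne : ∀ᶠ x in l, f x ≠ σ i₀) :
    Tendsto (fun x => (f x - σ i₀) * (f x - σ i)⁻¹) l (nhds (if i = i₀ then 1 else 0)) := by
  by_cases h : i = i₀
  · subst h
    rw [if_pos rfl]
    refine tendsto_const_nhds.congr' ?_
    filter_upwards [hne] with x hx
    exact (mul_inv_cancel₀ (sub_ne_zero.2 hx)).symm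
  · rw [if_neg h]
    have h1 : σ i₀ - σ i ≠ 0 := sub_ne_zero.2 fun e => h (hσ e).symm
    have := (hf.sub_const (σ i₀)).mul ((hf.sub_const (σ i)).inv₀ h1)
    simpa using this

/-- interpolation part of Proposition 4.1: With distinct support
points `σ i`, `π j`, matrix data `H i j ∈ ℂ^{m×n}`, scalar weights `α i j` with
`α i₀ j₀ ≠ 0`, and the MIMO p-AAA choice `B i j = α i j • H i j`, the
matrix-valued barycentric form `H̃(s,p) = N(s,p)/d(s,p)` (scalar division of the
matrix numerator by the scalar denominator) tends to `H i₀ j₀` as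
`(s,p) → (σ i₀, π j₀)` within the pairs avoiding all support points. -/
theorem mimo_barycentric_interpolation
    (k q m n : ℕ) (σ : Fin k → ℂ) (π : Fin q → ℂ)
    (hσ : Function.Injective σ) (hπ : Function.Injective π)
    (H : Fin k → Fin q → Matrix (Fin m) (Fin n) ℂ)
    (α : Fin k → Fin q → ℂ)
    (B : Fin k → Fin q → Matrix (Fin m) (Fin n) ℂ)
    (hB : ∀ i j, B i j = α i j • H i j)
    (i₀ : Fin k) (j₀ : Fin q) (hα : α i₀ j₀ ≠ 0) :
    Tendsto (fun x : ℂ × ℂ =>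
        (∑ i, ∑ j, α i j / ((x.1 - σ i) * (x.2 - π j)))⁻¹ •
          (∑ i, ∑ j, ((x.1 - σ i) * (x.2 - π j))⁻¹ • B i j))
      (nhdsWithin (σ i₀, π j₀)
        {x : ℂ × ℂ | (∀ i, x.1 ≠ σ i) ∧ (∀ j, x.2 ≠ π j)})
      (nhds (H i₀ j₀)) := by
  set l := nhdsWithin (σ i₀, π j₀) {x : ℂ × ℂ | (∀ i, x.1 ≠ σ i) ∧ (∀ j, x.2 ≠ π j)} with hl
  have hmem : ∀ᶠ x in l, (∀ i, x.1 ≠ σ i) ∧ (∀ j, x.2 ≠ π j) := self_mem_nhdsWithin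
  have h1 : Tendsto (fun x : ℂ × ℂ => x.1) l (nhds (σ i₀)) :=
    (continuous_fst.tendsto (σ i₀, π j₀)).mono_left nhdsWithin_le_nhds
  have h2 : Tendsto (fun x : ℂ × ℂ => x.2) l (nhds (π j₀)) :=
    (continuous_snd.tendsto (σ i₀, π j₀)).mono_left nhdsWithin_le_nhds
  have hw : ∀ i j, Tendsto (fun x : ℂ × ℂ =>
      ((x.1 - σ i₀) * (x.1 - σ i)⁻¹) * ((x.2 - π j₀) * (x.2 - π j)⁻¹)) l
      (nhds ((if i = i₀ then 1 else 0) * (if j = j₀ then 1 else 0))) := fun i j =>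
    (aux_weight σ hσ i₀ i l _ h1 (hmem.mono fun x hx => hx.1 i₀)).mul
      (aux_weight π hπ j₀ j l _ h2 (hmem.mono fun x hx => hx.2 j₀))
  have hd := tendsto_finsetSum Finset.univ fun i _ =>
    tendsto_finsetSum Finset.univ fun j _ => (hw i j).mul_const (α i j)
  have hN := tendsto_finsetSum Finset.univ fun i _ =>
    tendsto_finsetSum Finset.univ fun j _ => (hw i j).smul_const (B i j)
  have ed : ∑ i, ∑ j, ((if i = i₀ then (1 : ℂ) else 0) * (if j = j₀ then 1 else 0)) * α i j
      = α i₀ j₀ := by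
    simp
  have eN : ∑ i, ∑ j, ((if i = i₀ then (1 : ℂ) else 0) * (if j = j₀ then 1 else 0)) • B i j
      = B i₀ j₀ := by
    simp [mul_smul, ← Finset.smul_sum]
  rw [ed] at hd
  rw [eN] at hN
  have key := (hd.inv₀ hα).smul hN
  rw [hB, inv_smul_smul₀ hα] at key
  refine key.congr' ?_
  filter_upwards [hmem] with x hx
  have hc : (x.1 - σ i₀) * (x.2 - π j₀) ≠ 0 :=
    mul_ne_zero (sub_ne_zero.2 (hx.1 i₀)) (sub_ne_zero.2 (hx.2 j₀))
  have e1 : ∑ i, ∑ j, ((x.1 - σ i₀) * (x.1 - σ i)⁻¹) * ((x.2 - π j₀) * (x.2 - π j)⁻¹) * α i j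
      = ((x.1 - σ i₀) * (x.2 - π j₀)) * ∑ i, ∑ j, α i j / ((x.1 - σ i) * (x.2 - π j)) := by
    simp only [Finset.mul_sum]
    refine Finset.sum_congr rfl fun i _ => Finset.sum_congr rfl fun j _ => ?_
    rw [div_eq_mul_inv, mul_inv]
    ring
  have e2 : ∑ i, ∑ j, (((x.1 - σ i₀) * (x.1 - σ i)⁻¹) * ((x.2 - π j₀) * (x.2 - π j)⁻¹)) • B i j
      = ((x.1 - σ i₀) * (x.2 - π j₀)) • ∑ i, ∑ j, ((x.1 - σ i) * (x.2 - π j))⁻¹ • B i j := by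
    simp only [Finset.smul_sum, smul_smul]
    refine Finset.sum_congr rfl fun i _ => Finset.sum_congr rfl fun j _ => ?_
    congr 1
    rw [mul_inv]
    ring
  rw [e1, e2, smul_smul, mul_inv, mul_right_comm, inv_mul_cancel₀ hc, one_mul]
end

section
/- Let σ₁,…,σ_k, π₁,…,π_q, and ζ₁,…,ζ_o be three families of complex numbers, each family consisting of distinct points, let h_{ijℓ} ∈ ℂ be data values for 1 ≤ i ≤ k, 1 ≤ j ≤ q, 1 ≤ ℓ ≤ o, and let α_{ijℓ} ∈ ℂ with α_{i₀j₀ℓ₀} ≠ 0 for a fixed triple (i₀, j₀, ℓ₀). Set β_{ijℓ} = h_{ijℓ}·α_{ijℓ}, and define the three-variable barycentric form H̃(s,p,z) = (Σ_{i,j,ℓ} β_{ijℓ}/((s−σ_i)(p−π_j)(z−ζ_ℓ))) / (Σ_{i,j,ℓ} α_{ijℓ}/((s−σ_i)(p−π_j)(z−ζ_ℓ))). Then H̃(s,p,z) tends to h_{i₀j₀ℓ₀} as (s,p,z) tends to (σ_{i₀}, π_{j₀}, ζ_{ℓ₀}) within the set of triples (s,p,z) with s ≠ σ_i for all i, p ≠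 π_j for all j, and z ≠ ζ_ℓ for all ℓ. That is, the three-variable barycentric form interpolates the data value h_{i₀j₀ℓ₀} at the support triple (σ_{i₀}, π_{j₀}, ζ_{ℓ₀}). -/
open Filter Topology

lemma ratio_tendsto_aux {X : Type*} {n : ℕ} (σ : Fin n → ℂ) (hσ : Function.Injective σ)
    (i₀ : Fin n) (F : Filter X) (u : X → ℂ) (hu : Tendsto u F (nhds (σ i₀)))
    (hne : ∀ᶠ x in F, ∀ i, u x ≠ σ i) (i : Fin n) :
    Tendsto (fun x => (u x - σ i₀) / (u x - σ i)) F (nhds (if i = i₀ then 1 else 0)) := by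
  by_cases hi : i = i₀
  · subst hi
    rw [if_pos rfl]
    refine tendsto_const_nhds.congr' ?_
    filter_upwards [hne] with x hx
    exact (div_self (sub_ne_zero.2 (hx i))).symm
  · rw [if_neg hi]
    have h1 := hu.sub_const (σ i₀)
    have h2 := hu.sub_const (σ i)
    have h3 := h1.div h2 (sub_ne_zero.2 fun e => hi (hσ e).symm)
    rw [sub_self, zero_div] at h3
    exact h3

/-- With three families of distinct support points `σ i`, `π j`,
`ζ ℓ`, data `h i j ℓ`, weights `α i j ℓ` with `α i₀ j₀ ℓ₀ ≠ 0`, and the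
interpolatory choice `β i j ℓ = h i j ℓ * α i j ℓ`, the three-variable
barycentric form tends to `h i₀ j₀ ℓ₀` as `(s,p,z) → (σ i₀, π j₀, ζ ℓ₀)` within
the triples avoiding all support points; i.e. it interpolates the data at the
support triple. -/
theorem three_variable_barycentric_interpolation
    (k q o : ℕ) (σ : Fin k → ℂ) (π : Fin q → ℂ) (ζ : Fin o → ℂ)
    (hσ : Function.Injective σ) (hπ : Function.Injective π)
    (hζ : Function.Injective ζ)
    (h α β : Fin k → Fin q → Fin o → ℂ)
    (hβ : ∀ i j l, β i j l = h i j l * α i j l)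
    (i₀ : Fin k) (j₀ : Fin q) (l₀ : Fin o) (hα : α i₀ j₀ l₀ ≠ 0) :
    Tendsto (fun x : ℂ × ℂ × ℂ =>
        (∑ i, ∑ j, ∑ l, β i j l /
            ((x.1 - σ i) * (x.2.1 - π j) * (x.2.2 - ζ l))) /
        (∑ i, ∑ j, ∑ l, α i j l /
            ((x.1 - σ i) * (x.2.1 - π j) * (x.2.2 - ζ l))))
      (nhdsWithin (σ i₀, π j₀, ζ l₀)
        {x : ℂ × ℂ × ℂ |
          (∀ i, x.1 ≠ σ i) ∧ (∀ j, x.2.1 ≠ π j) ∧ (∀ l, x.2.2 ≠ ζ l)})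
      (nhds (h i₀ j₀ l₀)) := by
  set F := nhdsWithin (σ i₀, π j₀, ζ l₀)
        {x : ℂ × ℂ × ℂ |
          (∀ i, x.1 ≠ σ i) ∧ (∀ j, x.2.1 ≠ π j) ∧ (∀ l, x.2.2 ≠ ζ l)} with hF
  have hmem : ∀ᶠ x in F, (∀ i, x.1 ≠ σ i) ∧ (∀ j, x.2.1 ≠ π j) ∧ (∀ l, x.2.2 ≠ ζ l) :=
    eventually_mem_nhdsWithin
  have hid : Tendsto (fun x : ℂ × ℂ × ℂ => x) F (nhds (σ i₀, π j₀, ζ l₀)) :=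
    tendsto_id.mono_left nhdsWithin_le_nhds
  have r1 := ratio_tendsto_aux σ hσ i₀ F (fun x => x.1) hid.fst_nhds (hmem.mono fun x hx => hx.1)
  have r2 := ratio_tendsto_aux π hπ j₀ F (fun x => x.2.1) hid.snd_nhds.fst_nhds
    (hmem.mono fun x hx => hx.2.1)
  have r3 := ratio_tendsto_aux ζ hζ l₀ F (fun x => x.2.2) hid.snd_nhds.snd_nhds
    (hmem.mono fun x hx => hx.2.2)
  have key : ∀ a : Fin k → Fin q → Fin o → ℂ,
      Tendsto (fun x : ℂ × ℂ × ℂ => ((x.1 - σ i₀) * (x.2.1 - π j₀) * (x.2.2 - ζ l₀)) *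
        ∑ i, ∑ j, ∑ l, a i j l / ((x.1 - σ i) * (x.2.1 - π j) * (x.2.2 - ζ l)))
        F (nhds (a i₀ j₀ l₀)) := by
    intro a
    have hs := tendsto_finsetSum (Finset.univ : Finset (Fin k)) fun i _ =>
      tendsto_finsetSum (Finset.univ : Finset (Fin q)) fun j _ =>
      tendsto_finsetSum (Finset.univ : Finset (Fin o)) fun l _ =>
        (((r1 i).mul (r2 j)).mul (r3 l)).const_mul (a i j l)
    have e : (∑ i, ∑ j, ∑ l, a i j l * ((if i = i₀ then (1:ℂ) else 0) *
        (if j = j₀ then 1 else 0) * (if l = l₀ then 1 else 0))) = a i₀ j₀ l₀ := by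
      simp
    rw [e] at hs
    refine hs.congr fun x => ?_
    simp only [Finset.mul_sum]
    refine Finset.sum_congr rfl fun i _ => Finset.sum_congr rfl fun j _ =>
      Finset.sum_congr rfl fun l _ => ?_
    simp only [div_eq_mul_inv, mul_inv]
    ring
  have hlim := (key β).div (key α) hα
  rw [hβ, mul_div_cancel_right₀ _ hα] at hlim
  refine hlim.congr' ?_
  filter_upwards [hmem] with x hx
  exact mul_div_mul_left _ _ (mul_ne_zero (mul_ne_zero (sub_ne_zero.2 (hx.1 i₀))
    (sub_ne_zero.2 (hx.2.1 j₀))) (sub_ne_zero.2 (hx.2.2 l₀)))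
end
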